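/- Let n ≥ 1, let B be a symmetric positive-definite n×n real matrix, and let h̄ : ℝⁿ → ℝ be a C² function with G := sup_y |∇h̄(y)| < ∞ and H := sup_y ‖∇²h̄(y)‖ < ∞, such that for every x ∈ ℝⁿ the function y ↦ exp(−|x−y|²_B/2 − h̄(y)) is integrable. Define p(x) := ∫_{ℝⁿ} exp(−|x−y|²_B/2) exp(−h̄(y)) dy and q(x) := −log p(x). Then q is twice differentiable on ℝⁿ and for every x, ‖∇²q(x)‖ ≤ H + G². (Hessian bound of Theorem 3.1 via the heat-kernel representation of the solution of the viscous Hamilton–Jacobi equation.) -/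

import Mathlib

open MeasureTheory Real Matrix
open scoped RealInnerProductSpace

noncomputable section

/-- Weighted squared norm `|x|_M² = ⟨M⁻¹ x, x⟩` for a matrix `M`. -/
def wsqNorm {n : ℕ} (M : Matrix (Fin n) (Fin n) ℝ) (x : EuclideanSpace ℝ (Fin n)) : ℝ :=
  ⟪(Matrix.toEuclideanLin M⁻¹) x, x⟫

/-!
The Hopf–Cole transform `q = -log (ν ∗ exp (-h))` has derivatives that are moments of the Gibbs
measure `π_x`, the law of `y = x - z` for `z` distributed as `exp (-h (x - z)) ν(dz)` normalized.
Differentiating once gives `∇q x = E_{π_x} [∇h]`; differentiating a Gibbs expectation again, both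
the integrand and the density contribute, and `∇²q x = E_{π_x} [∇²h] - Cov_{π_x} (∇h)`. The first
term is bounded by `H`. The second is an average of the rank one operators
`(∇h - m) ⊗ (∇h - m)`, so its norm is at most the variance of `∇h`, hence at most `G²`.
-/

open InnerProductSpace ContinuousLinearMap

section Covariance

theorem integral_bilin_sub_integral {Ω E V : Type*} [MeasurableSpace Ω] {μ : Measure Ω}
    [IsProbabilityMeasure μ] [NormedAddCommGroup E] [NormedSpace ℝ E] [CompleteSpace E]
    [NormedAddCommGroup V] [NormedSpace ℝ V] [CompleteSpace V] (L : E →L[ℝ] E →L[ℝ] V)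
    {X : Ω → E} (hX : MemLp X 2 μ) :
    ∫ ω, L (X ω - ∫ ω', X ω' ∂μ) (X ω - ∫ ω', X ω' ∂μ) ∂μ =
      ∫ ω, L (X ω) (X ω) ∂μ - L (∫ ω, X ω ∂μ) (∫ ω, X ω ∂μ) := by
  have hX₁ : Integrable X μ := hX.integrable (by norm_num)
  have hL : Integrable (fun ω => L (X ω) (X ω)) μ :=
    memLp_one_iff_integrable.1 (L.memLp_of_bilin 1 hX hX)
  set m := ∫ ω, X ω ∂μ
  have hleft : Integrable (fun ω => L m (X ω)) μ := (L m).integrable_comp hX₁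
  have hright : Integrable (fun ω => L.flip m (X ω)) μ := (L.flip m).integrable_comp hX₁
  have hL_sub : Integrable (fun ω => L (X ω) (X ω) - L m (X ω)) μ := hL.sub hleft
  have hright_sub : Integrable (fun ω => L.flip m (X ω) - L m m) μ :=
    hright.sub (integrable_const _)
  calc ∫ ω, L (X ω - m) (X ω - m) ∂μ
      = ∫ ω, (L (X ω) (X ω) - L m (X ω) - (L.flip m (X ω) - L m m)) ∂μ := by
        simp only [map_sub, _root_.sub_apply, flip_apply]
    _ = ∫ ω, L (X ω) (X ω) ∂μ - L m m - (L.flip m m - L m m) := by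
        rw [integral_sub hL_sub hright_sub, integral_sub hL hleft,
          integral_sub hright (integrable_const _), (L m).integral_comp_comm hX₁,
          (L.flip m).integral_comp_comm hX₁, integral_const, probReal_univ, one_smul]
    _ = ∫ ω, L (X ω) (X ω) ∂μ - L m m := by rw [flip_apply, sub_self, sub_zero]

variable {Ω E : Type*} [MeasurableSpace Ω] {μ : Measure Ω}
  [NormedAddCommGroup E] [InnerProductSpace ℝ E] {X : Ω → E}

/-- The covariance operator `E[(X - E[X]) ⊗ (X - E[X])]` of a vector-valued random variable `X`.
Mathlib's `ProbabilityTheory.covarianceOperator` is the uncentered second moment of a law. -/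
def centeredCovariance (X : Ω → E) (μ : Measure Ω) : E →L[ℝ] E :=
  ∫ ω, rankOne ℝ (X ω - ∫ ω', X ω' ∂μ) (X ω - ∫ ω', X ω' ∂μ) ∂μ

theorem integrable_rankOne_self (hX : MemLp X 2 μ) :
    Integrable (fun ω => rankOne ℝ (X ω) (X ω)) μ :=
  memLp_one_iff_integrable.1
    ((rankOne ℝ : E →L[ℝ] E →L[ℝ] E →L[ℝ] E).memLp_of_bilin 1 hX hX)

variable [IsProbabilityMeasure μ] [CompleteSpace E]

theorem centeredCovariance_eq_sub (hX : MemLp X 2 μ) :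
    centeredCovariance X μ =
      ∫ ω, rankOne ℝ (X ω) (X ω) ∂μ - rankOne ℝ (∫ ω, X ω ∂μ) (∫ ω, X ω ∂μ) :=
  integral_bilin_sub_integral (V := E →L[ℝ] E) (L := rankOne ℝ) hX

theorem integral_norm_sub_integral_sq_le (hX : MemLp X 2 μ) :
    ∫ ω, ‖X ω - ∫ ω', X ω' ∂μ‖ ^ 2 ∂μ ≤ ∫ ω, ‖X ω‖ ^ 2 ∂μ := by
  have variance_eq : ∫ ω, ‖X ω - ∫ ω', X ω' ∂μ‖ ^ 2 ∂μ =
      ∫ ω, ‖X ω‖ ^ 2 ∂μ - ‖∫ ω, X ω ∂μ‖ ^ 2 := by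
    simp only [← real_inner_self_eq_norm_sq]
    exact integral_bilin_sub_integral (innerSL ℝ) hX
  exact variance_eq.trans_le (sub_le_self _ (sq_nonneg _))

theorem norm_centeredCovariance_le {G : ℝ} (hX : AEStronglyMeasurable X μ)
    (hG : ∀ᵐ ω ∂μ, ‖X ω‖ ≤ G) : ‖centeredCovariance X μ‖ ≤ G ^ 2 := by
  have hX₂ : MemLp X 2 μ := .of_bound hX G hG
  calc ‖centeredCovariance X μ‖
      ≤ ∫ ω, ‖X ω - ∫ ω', X ω' ∂μ‖ ^ 2 ∂μ := by
        simpa only [centeredCovariance, norm_rankOne, ← sq] using norm_integral_le_integral_norm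
          fun ω => rankOne ℝ (X ω - ∫ ω', X ω' ∂μ) (X ω - ∫ ω', X ω' ∂μ)
    _ ≤ ∫ ω, ‖X ω‖ ^ 2 ∂μ := integral_norm_sub_integral_sq_le hX₂
    _ ≤ ∫ _, G ^ 2 ∂μ := by
        refine integral_mono_ae (hX₂.integrable_norm_pow (by norm_num)) (integrable_const _) ?_
        filter_upwards [hG] with ω hω using pow_le_pow_left₀ (norm_nonneg _) hω 2
    _ = G ^ 2 := by simp

end Covariance

section TwistedFDeriv

variable {E V : Type*} [NormedAddCommGroup E] [NormedSpace ℝ E]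
  [NormedAddCommGroup V] [NormedSpace ℝ V] {h : E → ℝ} {F : E → V}

/-- The derivative of `F` twisted by the weight `exp (-h)`, i.e. `exp h • D (exp (-h) • F)`; it is
what remains of the derivative of `exp (-h) • F` after factoring out the weight. -/
def twistedFDeriv (h : E → ℝ) (F : E → V) (y : E) : E →L[ℝ] V :=
  fderiv ℝ F y - (fderiv ℝ h y).smulRight (F y)

theorem continuous_twistedFDeriv (hh : ContDiff ℝ 1 h) (hF : ContDiff ℝ 1 F) :
    Continuous (twistedFDeriv h F) :=
  (hF.continuous_fderiv one_ne_zero).sub <|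
    ((smulRightL ℝ E V).continuous.comp (hh.continuous_fderiv one_ne_zero)).clm_apply hF.continuous

theorem norm_twistedFDeriv_le {G A A' : ℝ} {y : E} (hG : ‖fderiv ℝ h y‖ ≤ G) (hA : ‖F y‖ ≤ A)
    (hA' : ‖fderiv ℝ F y‖ ≤ A') : ‖twistedFDeriv h F y‖ ≤ A' + G * A := by
  have hG₀ : 0 ≤ G := (norm_nonneg _).trans hG
  calc ‖twistedFDeriv h F y‖ ≤ ‖fderiv ℝ F y‖ + ‖fderiv ℝ h y‖ * ‖F y‖ := by
        rw [← norm_smulRight_apply]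
        exact norm_sub_le _ _
    _ ≤ A' + G * A := by gcongr

theorem hasFDerivAt_exp_neg_smul {y : E} (hh : DifferentiableAt ℝ h y)
    (hF : DifferentiableAt ℝ F y) :
    HasFDerivAt (fun y => exp (-h y) • F y) (exp (-h y) • twistedFDeriv h F y) y := by
  refine (hh.hasFDerivAt.neg.exp.smul hF.hasFDerivAt).congr_fderiv ?_
  ext v
  simp [twistedFDeriv, smul_smul, sub_eq_add_neg]

theorem exp_neg_le_of_norm_fderiv_le {G : ℝ} (hh : Differentiable ℝ h)
    (hG : ∀ y, ‖fderiv ℝ h y‖ ≤ G) (y y' : E) :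
    exp (-h y') ≤ exp (G * ‖y' - y‖) * exp (-h y) := by
  have hlip : |h y' - h y| ≤ G * ‖y' - y‖ :=
    convex_univ.norm_image_sub_le_of_norm_fderiv_le (fun z _ => hh z) (fun z _ => hG z)
      (Set.mem_univ y) (Set.mem_univ y')
  rw [← exp_add]
  gcongr
  linarith [neg_abs_le (h y' - h y)]

end TwistedFDeriv

section Gibbs

variable {E V : Type*} [NormedAddCommGroup E] [MeasurableSpace E]
  [NormedAddCommGroup V] [NormedSpace ℝ V] {ν : Measure E} {h : E → ℝ} {x : E}

/-- The partition function `Z x = ∫ exp (-h (x - z)) dν(z)`, the convolution of `exp (-h)` with the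
measure `ν`. -/
def partitionFunction (ν : Measure E) (h : E → ℝ) (x : E) : ℝ :=
  ∫ z, exp (-h (x - z)) ∂ν

/-- The Hopf–Cole transform `-log (ν ∗ exp (-h))`. -/
def hopfCole (ν : Measure E) (h : E → ℝ) (x : E) : ℝ :=
  -log (partitionFunction ν h x)

/-- The Gibbs measure at `x`: the probability measure proportional to `exp (-h)` times the image
of `ν` under `z ↦ x - z`. When `ν` has density `k` it is proportional to `k (x - y) exp (-h y) dy`.
-/
def gibbsMeasure (ν : Measure E) (h : E → ℝ) (x : E) : Measure E :=
  (ν.map (x - ·)).tilted fun y => -h y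

theorem partitionFunction_pos [NeZero ν] (hint : Integrable (fun z => exp (-h (x - z))) ν) :
    0 < partitionFunction ν h x :=
  integral_exp_pos hint

variable [BorelSpace E]

theorem integral_gibbsMeasure (φ : E → V) :
    ∫ y, φ y ∂gibbsMeasure ν h x =
      (partitionFunction ν h x)⁻¹ • ∫ z, exp (-h (x - z)) • φ (x - z) ∂ν := by
  have hx : MeasurableEmbedding (x - ·) := (Homeomorph.subLeft x).measurableEmbedding
  rw [gibbsMeasure, integral_tilted, hx.integral_map, hx.integral_map, ← integral_smul]
  simp only [partitionFunction, div_eq_inv_mul, smul_smul]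

theorem isProbabilityMeasure_gibbsMeasure [NeZero ν]
    (hint : Integrable (fun z => exp (-h (x - z))) ν) :
    IsProbabilityMeasure (gibbsMeasure ν h x) := by
  have hx : MeasurableEmbedding (x - ·) := (Homeomorph.subLeft x).measurableEmbedding
  have : NeZero (ν.map (x - ·)) :=
    ⟨(Measure.map_ne_zero_iff hx.measurable.aemeasurable).2 (NeZero.ne ν)⟩
  exact isProbabilityMeasure_tilted (hx.integrable_map_iff.2 hint)

theorem integral_exp_neg_smul [NeZero ν] (hint : Integrable (fun z => exp (-h (x - z))) ν)
    (φ : E → V) :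
    ∫ z, exp (-h (x - z)) • φ (x - z) ∂ν =
      partitionFunction ν h x • ∫ y, φ y ∂gibbsMeasure ν h x := by
  rw [integral_gibbsMeasure, smul_inv_smul₀ (partitionFunction_pos hint).ne']

end Gibbs

section Derivative

variable {E V : Type*} [NormedAddCommGroup E] [NormedSpace ℝ E]
  [SecondCountableTopology E] [MeasurableSpace E] [BorelSpace E]
  [NormedAddCommGroup V] [NormedSpace ℝ V]
  {ν : Measure E} {h : E → ℝ} {F : E → V} {G A A' : ℝ}

theorem hasFDerivAt_integral_exp_neg_smul (hh : ContDiff ℝ 1 h) (hG : ∀ y, ‖fderiv ℝ h y‖ ≤ G)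
    (hF : ContDiff ℝ 1 F) (hA : ∀ y, ‖F y‖ ≤ A) (hA' : ∀ y, ‖fderiv ℝ F y‖ ≤ A') {x : E}
    (hint : Integrable (fun z => exp (-h (x - z))) ν) :
    HasFDerivAt (fun x => ∫ z, exp (-h (x - z)) • F (x - z) ∂ν)
      (∫ z, exp (-h (x - z)) • twistedFDeriv h F (x - z) ∂ν) x := by
  have hh₁ : Differentiable ℝ h := hh.differentiable one_ne_zero
  have hG₀ : 0 ≤ G := (norm_nonneg _).trans (hG 0)
  have hA₀ : 0 ≤ A' + G * A :=
    (norm_nonneg _).trans (norm_twistedFDeriv_le (hG 0) (hA 0) (hA' 0))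
  have hsub (y : E) : Continuous fun z : E => y - z := continuous_sub_left y
  have hexp (y : E) : Continuous fun z => exp (-h (y - z)) :=
    (hh.continuous.comp (hsub y)).neg.rexp
  have hT := continuous_twistedFDeriv hh hF
  refine hasFDerivAt_integral_of_dominated_of_fderiv_le
    (bound := fun z => exp G * (A' + G * A) * exp (-h (x - z)))
    (F' := fun y z => exp (-h (y - z)) • twistedFDeriv h F (y - z))
    (Metric.ball_mem_nhds x one_pos)
    (.of_forall fun y => ((hexp y).smul (hF.continuous.comp (hsub y))).aestronglyMeasurable)
    (hint.smul_bdd A (hF.continuous.comp (hsub x)).aestronglyMeasurable (.of_forall fun z => hA _))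
    ((hexp x).smul (hT.comp (hsub x))).aestronglyMeasurable
    (.of_forall fun z y hy => ?_) (hint.const_mul _) (.of_forall fun z y _ => ?_)
  · have hyx : ‖y - z - (x - z)‖ ≤ 1 := by
      rw [sub_sub_sub_cancel_right]
      exact (mem_ball_iff_norm.1 hy).le
    calc ‖exp (-h (y - z)) • twistedFDeriv h F (y - z)‖
        = exp (-h (y - z)) * ‖twistedFDeriv h F (y - z)‖ := by rw [norm_smul, norm_eq_abs, abs_exp]
      _ ≤ exp (G * ‖y - z - (x - z)‖) * exp (-h (x - z)) * (A' + G * A) := by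
          gcongr
          · exact exp_neg_le_of_norm_fderiv_le hh₁ hG _ _
          · exact norm_twistedFDeriv_le (hG _) (hA _) (hA' _)
      _ ≤ exp (G * 1) * exp (-h (x - z)) * (A' + G * A) := by gcongr
      _ = exp G * (A' + G * A) * exp (-h (x - z)) := by ring_nf
  · exact (hasFDerivAt_comp_sub (f := fun y => exp (-h y) • F y) z).2
      (hasFDerivAt_exp_neg_smul (hh₁ _) (hF.differentiable one_ne_zero _))

variable [NeZero ν]

theorem hasFDerivAt_partitionFunction (hh : ContDiff ℝ 1 h) (hG : ∀ y, ‖fderiv ℝ h y‖ ≤ G) {x : E}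
    (hint : Integrable (fun z => exp (-h (x - z))) ν) :
    HasFDerivAt (partitionFunction ν h)
      (-(partitionFunction ν h x • ∫ y, fderiv ℝ h y ∂gibbsMeasure ν h x)) x := by
  have htwisted : twistedFDeriv h (fun _ => (1 : ℝ)) = fun y => -fderiv ℝ h y := by
    ext y v
    simp [twistedFDeriv]
  have hderiv := hasFDerivAt_integral_exp_neg_smul (F := fun _ => (1 : ℝ)) (A := 1) (A' := 0) hh hG
    contDiff_const (by simp) (by simp) hint
  rw [integral_exp_neg_smul hint, htwisted, integral_neg, smul_neg] at hderiv
  simp only [smul_eq_mul, mul_one] at hderiv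
  exact hderiv

theorem hasFDerivAt_hopfCole (hh : ContDiff ℝ 1 h) (hG : ∀ y, ‖fderiv ℝ h y‖ ≤ G) {x : E}
    (hint : Integrable (fun z => exp (-h (x - z))) ν) :
    HasFDerivAt (hopfCole ν h) (∫ y, fderiv ℝ h y ∂gibbsMeasure ν h x) x := by
  have hZ : partitionFunction ν h x ≠ 0 := (partitionFunction_pos hint).ne'
  refine ((hasFDerivAt_partitionFunction hh hG hint).log hZ).neg.congr_fderiv ?_
  rw [smul_neg, neg_neg, inv_smul_smul₀ hZ]

theorem hasFDerivAt_integral_gibbsMeasure (hh : ContDiff ℝ 1 h) (hG : ∀ y, ‖fderiv ℝ h y‖ ≤ G)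
    (hF : ContDiff ℝ 1 F) (hA : ∀ y, ‖F y‖ ≤ A) (hA' : ∀ y, ‖fderiv ℝ F y‖ ≤ A') {x : E}
    (hint : Integrable (fun z => exp (-h (x - z))) ν) :
    HasFDerivAt (fun x => ∫ y, F y ∂gibbsMeasure ν h x)
      (∫ y, twistedFDeriv h F y ∂gibbsMeasure ν h x +
        (∫ y, fderiv ℝ h y ∂gibbsMeasure ν h x).smulRight (∫ y, F y ∂gibbsMeasure ν h x)) x := by
  have hZ : partitionFunction ν h x ≠ 0 := (partitionFunction_pos hint).ne'
  have hinv := (hasDerivAt_inv hZ).comp_hasFDerivAt x (hasFDerivAt_partitionFunction hh hG hint)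
  have hquot := hinv.smul (hasFDerivAt_integral_exp_neg_smul hh hG hF hA hA' hint)
  rw [integral_exp_neg_smul hint, integral_exp_neg_smul hint] at hquot
  have hexpectation : (fun x => ∫ y, F y ∂gibbsMeasure ν h x) =
      fun x => (partitionFunction ν h x)⁻¹ • ∫ z, exp (-h (x - z)) • F (x - z) ∂ν :=
    funext fun _ => integral_gibbsMeasure F
  rw [hexpectation]
  refine hquot.congr_fderiv ?_
  ext v
  simp only [Function.comp_apply, inv_smul_smul₀ hZ, _root_.add_apply, _root_.smul_apply,
    smulRight_apply, _root_.neg_apply, smul_smul, smul_eq_mul]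
  congr 2
  field_simp

end Derivative

section Gradient

variable {E : Type*} [NormedAddCommGroup E] [InnerProductSpace ℝ E] [CompleteSpace E]

theorem norm_fderiv_eq_norm_gradient (f : E → ℝ) (y : E) :
    ‖fderiv ℝ f y‖ = ‖gradient f y‖ := by
  rw [← toDual_gradient, LinearIsometryEquiv.norm_map]

theorem contDiff_gradient {f : E → ℝ} {m n : WithTop ℕ∞} (hf : ContDiff ℝ n f) (hmn : m + 1 ≤ n) :
    ContDiff ℝ m (gradient f) :=
  (toDual ℝ E).symm.contDiff.comp (hf.fderiv_right hmn)

theorem smulRight_toDual (u v : E) : (toDual ℝ E u).smulRight v = rankOne ℝ v u :=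
  rfl

theorem twistedFDeriv_gradient (h : E → ℝ) (y : E) :
    twistedFDeriv h (gradient h) y =
      fderiv ℝ (gradient h) y - rankOne ℝ (gradient h y) (gradient h y) := by
  rw [twistedFDeriv, ← toDual_gradient, smulRight_toDual]

theorem integral_fderiv_eq_toDual_integral_gradient [MeasurableSpace E] (μ : Measure E)
    (f : E → ℝ) : ∫ y, fderiv ℝ f y ∂μ = toDual ℝ E (∫ y, gradient f y ∂μ) := by
  simp only [← toDual_gradient]
  exact (toDual ℝ E).toContinuousLinearEquiv.integral_comp_comm _

end Gradient

section HessianBound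

variable {E : Type*} [NormedAddCommGroup E] [InnerProductSpace ℝ E] [CompleteSpace E]
  [SecondCountableTopology E] [MeasurableSpace E] [BorelSpace E]
  {ν : Measure E} [NeZero ν] {h : E → ℝ} {G H : ℝ}

theorem hasGradientAt_hopfCole (hh : ContDiff ℝ 1 h) (hG : ∀ y, ‖gradient h y‖ ≤ G) {x : E}
    (hint : Integrable (fun z => exp (-h (x - z))) ν) :
    HasGradientAt (hopfCole ν h) (∫ y, gradient h y ∂gibbsMeasure ν h x) x := by
  rw [hasGradientAt_iff_hasFDerivAt, ← integral_fderiv_eq_toDual_integral_gradient]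
  exact hasFDerivAt_hopfCole hh (fun y => (norm_fderiv_eq_norm_gradient h y).trans_le (hG y)) hint

theorem hasFDerivAt_gradient_hopfCole (hh : ContDiff ℝ 2 h) (hG : ∀ y, ‖gradient h y‖ ≤ G)
    (hH : ∀ y, ‖fderiv ℝ (gradient h) y‖ ≤ H)
    (hint : ∀ x, Integrable (fun z => exp (-h (x - z))) ν) (x : E) :
    HasFDerivAt (gradient (hopfCole ν h))
      (∫ y, fderiv ℝ (gradient h) y ∂gibbsMeasure ν h x -
        centeredCovariance (gradient h) (gibbsMeasure ν h x)) x := by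
  have hh₁ : ContDiff ℝ 1 h := hh.of_le one_le_two
  have hgrad : ContDiff ℝ 1 (gradient h) := contDiff_gradient hh (by norm_num)
  have := isProbabilityMeasure_gibbsMeasure (hint x)
  set γ := gibbsMeasure ν h x
  have hgrad₂ : MemLp (gradient h) 2 γ :=
    .of_bound hgrad.continuous.aestronglyMeasurable G (.of_forall hG)
  have hhess : Integrable (fderiv ℝ (gradient h)) γ :=
    .of_bound (hgrad.continuous_fderiv one_ne_zero).aestronglyMeasurable H (.of_forall hH)
  rw [gradient_eq fun x => hasGradientAt_hopfCole hh₁ hG (hint x)]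
  refine (hasFDerivAt_integral_gibbsMeasure hh₁
    (fun y => (norm_fderiv_eq_norm_gradient h y).trans_le (hG y)) hgrad hG hH (hint x)).congr_fderiv
    ?_
  calc ∫ y, twistedFDeriv h (gradient h) y ∂γ +
        (∫ y, fderiv ℝ h y ∂γ).smulRight (∫ y, gradient h y ∂γ)
      = ∫ y, (fderiv ℝ (gradient h) y - rankOne ℝ (gradient h y) (gradient h y)) ∂γ +
        rankOne ℝ (∫ y, gradient h y ∂γ) (∫ y, gradient h y ∂γ) := by
        simp only [twistedFDeriv_gradient, integral_fderiv_eq_toDual_integral_gradient,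
          smulRight_toDual]
    _ = ∫ y, fderiv ℝ (gradient h) y ∂γ - centeredCovariance (gradient h) γ := by
        rw [integral_sub hhess (integrable_rankOne_self hgrad₂), centeredCovariance_eq_sub hgrad₂,
          sub_add]

theorem stmt1_general (hh : ContDiff ℝ 2 h) (hG : ∀ y, ‖gradient h y‖ ≤ G)
    (hH : ∀ y, ‖fderiv ℝ (gradient h) y‖ ≤ H)
    (hint : ∀ x, Integrable (fun z => exp (-h (x - z))) ν) :
    Differentiable ℝ (hopfCole ν h) ∧ Differentiable ℝ (gradient (hopfCole ν h)) ∧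
      ∀ x, ‖fderiv ℝ (gradient (hopfCole ν h)) x‖ ≤ H + G ^ 2 := by
  have hhess := hasFDerivAt_gradient_hopfCole hh hG hH hint
  refine ⟨fun x => (hasGradientAt_hopfCole (hh.of_le one_le_two) hG (hint x)).differentiableAt,
    fun x => (hhess x).differentiableAt, fun x => ?_⟩
  have := isProbabilityMeasure_gibbsMeasure (hint x)
  have hmean : ‖∫ y, fderiv ℝ (gradient h) y ∂gibbsMeasure ν h x‖ ≤ H := by
    simpa using norm_integral_le_of_norm_le_const (μ := gibbsMeasure ν h x) (.of_forall hH)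
  have hgrad : Continuous (gradient h) := (contDiff_gradient (m := 1) hh (by norm_num)).continuous
  rw [(hhess x).fderiv]
  exact (norm_sub_le _ _).trans <| add_le_add hmean <|
    norm_centeredCovariance_le hgrad.aestronglyMeasurable (.of_forall hG)

end HessianBound

section Kernel

variable {E V : Type*} [AddCommGroup E] [MeasurableSpace E] [MeasurableAdd E] [MeasurableNeg E]
  {μ : Measure E} [μ.IsAddLeftInvariant] [μ.IsNegInvariant]
  [NormedAddCommGroup V] [NormedSpace ℝ V] {k : E → ℝ}

theorem integral_withDensity_comp_sub_left (hk : Measurable k) (hk₀ : ∀ z, 0 ≤ k z) (f : E → V)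
    (x : E) :
    ∫ z, f (x - z) ∂μ.withDensity (fun z => .ofReal (k z)) = ∫ y, k (x - y) • f y ∂μ := by
  rw [integral_withDensity_eq_integral_toReal_smul hk.ennreal_ofReal (by simp),
    ← integral_sub_left_eq_self _ μ x]
  simp only [sub_sub_cancel, ENNReal.toReal_ofReal (hk₀ _)]

theorem integrable_withDensity_comp_sub_left_iff (hk : Measurable k) (hk₀ : ∀ z, 0 ≤ k z)
    {f : E → V} (x : E) :
    Integrable (fun z => f (x - z)) (μ.withDensity fun z => .ofReal (k z)) ↔
      Integrable (fun y => k (x - y) • f y) μ := by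
  rw [integrable_withDensity_iff_integrable_smul' hk.ennreal_ofReal (by simp),
    ← integrable_comp_sub_left _ x]
  simp only [sub_sub_cancel, ENNReal.toReal_ofReal (hk₀ _)]

end Kernel

section HeatKernel

variable {n : ℕ} {B : Matrix (Fin n) (Fin n) ℝ}

theorem continuous_wsqNorm (B : Matrix (Fin n) (Fin n) ℝ) : Continuous (wsqNorm B) :=
  (LinearMap.continuous_of_finiteDimensional _).inner continuous_id

/-- The heat kernel measure `exp (-|z|_B² / 2) dz`, without its normalizing constant. -/
def heatKernelMeasure (B : Matrix (Fin n) (Fin n) ℝ) : Measure (EuclideanSpace ℝ (Fin n)) :=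
  volume.withDensity fun z => .ofReal (exp (-(wsqNorm B z) / 2))

theorem measurable_exp_neg_wsqNorm (B : Matrix (Fin n) (Fin n) ℝ) :
    Measurable fun z => exp (-(wsqNorm B z) / 2) :=
  ((continuous_wsqNorm B).neg.div_const 2).rexp.measurable

instance : NeZero (heatKernelMeasure B) where
  out hzero := by
    rw [heatKernelMeasure, withDensity_eq_zero_iff
      (measurable_exp_neg_wsqNorm B).ennreal_ofReal.aemeasurable] at hzero
    obtain ⟨z, hz⟩ := hzero.exists
    exact (ENNReal.ofReal_pos.2 (exp_pos _)).ne' hz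

theorem hopfCole_heatKernelMeasure (h : EuclideanSpace ℝ (Fin n) → ℝ)
    (x : EuclideanSpace ℝ (Fin n)) :
    hopfCole (heatKernelMeasure B) h x =
      -log (∫ y, exp (-(wsqNorm B (x - y)) / 2) * exp (-h y)) :=
  congrArg (fun t => -log t) <| integral_withDensity_comp_sub_left (measurable_exp_neg_wsqNorm B)
    (fun _ => (exp_pos _).le) (fun y => exp (-h y)) x

theorem integrable_heatKernelMeasure_iff {h : EuclideanSpace ℝ (Fin n) → ℝ}
    (x : EuclideanSpace ℝ (Fin n)) :
    Integrable (fun z => exp (-h (x - z))) (heatKernelMeasure B) ↔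
      Integrable fun y => exp (-(wsqNorm B (x - y)) / 2) * exp (-h y) :=
  integrable_withDensity_comp_sub_left_iff (f := fun y => exp (-h y))
    (measurable_exp_neg_wsqNorm B) (fun _ => (exp_pos _).le) x

end HeatKernel

/-- Hessian bound of Theorem 3.1 via the heat-kernel representation. -/
theorem stmt1 (n : ℕ) (hn : 1 ≤ n)
    (B : Matrix (Fin n) (Fin n) ℝ) (hB : B.PosDef)
    (hbar : EuclideanSpace ℝ (Fin n) → ℝ) (hreg : ContDiff ℝ 2 hbar)
    (G H : ℝ) (hG : ∀ y, ‖gradient hbar y‖ ≤ G)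
    (hH : ∀ y, ‖fderiv ℝ (gradient hbar) y‖ ≤ H)
    (hint : ∀ x, Integrable fun y =>
      Real.exp (-(wsqNorm B (x - y)) / 2) * Real.exp (-(hbar y)))
    (p q : EuclideanSpace ℝ (Fin n) → ℝ)
    (hp : ∀ x, p x = ∫ y, Real.exp (-(wsqNorm B (x - y)) / 2) * Real.exp (-(hbar y)))
    (hq : ∀ x, q x = -Real.log (p x)) :
    Differentiable ℝ q ∧ Differentiable ℝ (gradient q) ∧
      ∀ x, ‖fderiv ℝ (gradient q) x‖ ≤ H + G ^ 2 := by
  obtain rfl : q = hopfCole (heatKernelMeasure B) hbar :=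
    funext fun x => by rw [hq, hp, hopfCole_heatKernelMeasure]
  exact stmt1_general hreg hG hH fun x => (integrable_heatKernelMeasure_iff x).2 (hint x)
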